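/- (First-order loss gap bound for cross-entropy) Let C ≥ 1, let y : Fin C → ℝ, let c* be the true class, let σ_c = exp(y_c)/Σ_{c'} exp(y_{c'}), and let v_c = σ_c − [c = c*] be the cross-entropy gradient. Then for every vector Δ : Fin C → ℝ, |Σ_c v_c Δ_c| ≤ 2·(1 − σ_{c*}) · max_c |Δ_c|. -/

import Mathlib

/-- **First-order loss gap bound for cross-entropy.** With softmax probabilities
`σ_c = exp(y_c)/Σ_{c'} exp(y_{c'})` and cross-entropy gradient `v_c = σ_c − [c = c⋆]`,
for every logit-gap vector `Δ` one has `|Σ_c v_c Δ_c| ≤ 2 (1 − σ_{c⋆}) · max_c |Δ_c|`. -/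
theorem crossentropy_loss_gap_bound (C : ℕ) (hC : 1 ≤ C) (y : Fin C → ℝ) (cstar : Fin C)
    (σ : Fin C → ℝ)
    (hσ : ∀ c, σ c = Real.exp (y c) / ∑ c' : Fin C, Real.exp (y c'))
    (v : Fin C → ℝ)
    (hv : ∀ c, v c = σ c - (if c = cstar then (1 : ℝ) else 0))
    (Δ : Fin C → ℝ) :
    |∑ c : Fin C, v c * Δ c| ≤
      2 * (1 - σ cstar) *
        Finset.univ.sup' ⟨cstar, Finset.mem_univ cstar⟩ (fun c => |Δ c|) := by
  have hpos : 0 < ∑ c' : Fin C, Real.exp (y c') :=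
    Finset.sum_pos (fun i _ => Real.exp_pos _) ⟨cstar, Finset.mem_univ cstar⟩
  have h0 : ∀ c, 0 ≤ σ c := fun c => by
    rw [hσ]
    exact div_nonneg (Real.exp_pos _).le hpos.le
  have h1 : ∑ c, σ c = 1 := by
    simp_rw [hσ]
    rw [← Finset.sum_div]
    exact div_self hpos.ne'
  have hle : σ cstar ≤ 1 := by
    rw [← h1]
    exact Finset.single_le_sum (fun i _ => h0 i) (Finset.mem_univ cstar)
  have habs : ∀ c, |v c| = σ c + (if c = cstar then 1 - 2 * σ cstar else 0) := by
    intro c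
    rw [hv]
    by_cases h : c = cstar
    · subst h
      simp only [if_true]
      rw [abs_of_nonpos (by linarith)]
      ring
    · simp [h, abs_of_nonneg (h0 c)]
  have hsum : ∑ c, |v c| = 2 * (1 - σ cstar) := by
    simp_rw [habs]
    rw [Finset.sum_add_distrib, h1, Finset.sum_ite_eq' Finset.univ cstar]
    simp only [Finset.mem_univ, if_true]
    ring
  rw [← hsum, Finset.sum_mul]
  refine (Finset.abs_sum_le_sum_abs _ _).trans (Finset.sum_le_sum fun c _ => ?_)
  rw [abs_mul]
  exact mul_le_mul_of_nonneg_left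
    (Finset.le_sup' (fun c => |Δ c|) (Finset.mem_univ c)) (abs_nonneg _)
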